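/- Let n ≥ 2 and let c_n be the first positive zero of the Bessel function J_{(n−2)/2}. Then the function u(x) = |x|^{(2−n)/2} J_{(n−2)/2}(|x|) (extended appropriately at 0) is a smooth solution of Δu + u = 0 on ℝⁿ which is strictly positive on the open ball B(0, c_n) and vanishes on ∂B(0, c_n). -/

import Mathlib

open Metric Set

noncomputable section

/-- The Laplacian of a real-valued function on Euclidean space. -/
def lap {n : ℕ} (u : EuclideanSpace ℝ (Fin n) → ℝ) (x : EuclideanSpace ℝ (Fin n)) : ℝ :=
  ∑ i : Fin n, fderiv ℝ (fun y => fderiv ℝ u y (EuclideanSpace.single i 1)) x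
    (EuclideanSpace.single i 1)

/-- The Bessel function of the first kind of order `ν`, via its power series (for `x > 0`). -/
def besselJ (ν x : ℝ) : ℝ :=
  ∑' m : ℕ, ((-1 : ℝ) ^ m / (m.factorial * Real.Gamma (m + ν + 1))) *
    (x / 2) ^ (2 * m) * (x / 2) ^ ν

/-- `c_n`: the first positive zero of the Bessel function `J_{(n-2)/2}`. -/
def besselZero (n : ℕ) : ℝ :=
  sInf {t : ℝ | 0 < t ∧ besselJ (((n : ℝ) - 2) / 2) t = 0}

/-!
Write `J_ν(t) = (t/2)^ν C_ν(-t²/4)`, where `C_ν` is the Bessel–Clifford function, an entire function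
with `C_ν' = C_{ν+1}` and `C_ν(z) = (ν+1) C_{ν+1}(z) + z C_{ν+2}(z)`. The solution is
`u(x) = 2^{-ν} C_ν(-|x|²/4)` with `ν = (n-2)/2`; for this `ν` the recurrence is precisely the
radial form of `Δu + u = 0`. By the intermediate value theorem and `C_ν(0) > 0`, it remains to see
that `C_ν` has a negative zero. Since `(z^{ν+1} C_{ν+1}(-z))' = z^ν C_ν(-z)`, positivity of
`C_ν(-z)` for `z ∈ (0, b]` passes to `C_{ν+1}`, `C_{ν+2}` and `C_{ν+3}`, but for
`b = (ν+1)(ν+2)` two applications of the recurrence give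
`C_ν(-b) = -(ν+1) b C_{ν+3}(-b) < 0`.
-/

/-- The Bessel–Clifford function `C_ν`, the regularized hypergeometric function `₀F₁(; ν + 1; ·)`.
It is the entire factor of the Bessel function, see `besselJ_eq`. At the poles of `Γ` the value
`0⁻¹ = 0` is the correct one for `1 / Γ`, so no order `ν` is exceptional. -/
def besselClifford (ν z : ℝ) : ℝ :=
  ∑' m : ℕ, z ^ m / (m.factorial * Real.Gamma (m + ν + 1))

theorem summable_besselClifford (ν z : ℝ) :
    Summable fun m : ℕ => z ^ m / (m.factorial * Real.Gamma (m + ν + 1)) := by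
  have h := (Complex.regularizedHGFunSeries 0 {(ν : ℂ) + 1}).summable (x := (z : ℂ))
    (by rw [Complex.radius_regularizedHGFunSeries_eq_top (by simp)]; simp)
  rw [← Complex.summable_ofReal]
  refine h.congr fun m => ?_
  rw [FormalMultilinearSeries.apply_eq_pow_smul_coeff, Complex.regularizedHGFunSeries_coeff,
    Complex.regularizedHGFunCoeff, add_assoc (m : ℝ) ν 1, add_comm (m : ℝ) (ν + 1)]
  simp [← Complex.Gamma_ofReal, div_eq_mul_inv]

theorem hasSum_besselClifford (ν z : ℝ) :
    HasSum (fun m : ℕ => z ^ m / (m.factorial * Real.Gamma (m + ν + 1))) (besselClifford ν z) :=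
  (summable_besselClifford ν z).hasSum

theorem hasSum_besselClifford_add_one (ν z : ℝ) :
    HasSum (fun m : ℕ => m * z ^ (m - 1) / (m.factorial * Real.Gamma (m + ν + 1)))
      (besselClifford (ν + 1) z) := by
  rw [← hasSum_nat_add_iff' 1]
  simp only [Finset.sum_range_one, Nat.cast_zero, zero_mul, zero_div, sub_zero]
  refine (hasSum_besselClifford (ν + 1) z).congr_fun fun m => ?_
  rw [Nat.factorial_succ, Nat.add_sub_cancel, Nat.cast_mul, mul_assoc,
    mul_div_mul_left _ _ (Nat.cast_ne_zero.2 m.succ_ne_zero)]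
  push_cast
  ring_nf

theorem hasDerivAt_besselClifford (ν z : ℝ) :
    HasDerivAt (besselClifford ν) (besselClifford (ν + 1) z) z := by
  have hz : z ∈ ball (0 : ℝ) (|z| + 1) := by simp
  rw [← (hasSum_besselClifford_add_one ν z).tsum_eq]
  refine hasDerivAt_tsum_of_isPreconnected (hasSum_besselClifford_add_one ν (|z| + 1)).summable.norm
    isOpen_ball (convex_ball _ _).isPreconnected (fun m y _ => (hasDerivAt_pow m y).div_const _)
    (fun m y hy => ?_) hz (summable_besselClifford ν z) hz
  have hy' : |y| ≤ |(|z| + 1)| := by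
    simpa using (mem_ball_zero_iff.1 hy).le.trans (le_abs_self _)
  simp only [norm_div, norm_mul, norm_pow, Real.norm_eq_abs]
  gcongr

theorem continuous_besselClifford (ν : ℝ) : Continuous (besselClifford ν) :=
  continuous_iff_continuousAt.2 fun z => (hasDerivAt_besselClifford ν z).continuousAt

theorem contDiff_besselClifford (ν : ℝ) : ContDiff ℝ (⊤ : ℕ∞) (besselClifford ν) := by
  refine contDiff_infty.2 fun k => ?_
  induction k generalizing ν with
  | zero => exact contDiff_zero.2 (continuous_besselClifford ν)
  | succ k ih =>
    have hderiv : deriv (besselClifford ν) = besselClifford (ν + 1) :=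
      funext fun z => (hasDerivAt_besselClifford ν z).deriv
    rw [Nat.cast_succ, contDiff_succ_iff_deriv, hderiv]
    exact ⟨fun z => (hasDerivAt_besselClifford ν z).differentiableAt, by simp, ih (ν + 1)⟩

/-- Unlike `Real.Gamma_add_one`, this form of the functional equation also holds at `s = 0`. -/
theorem inv_Gamma_eq_mul_inv_Gamma_add_one (s : ℝ) :
    (Real.Gamma s)⁻¹ = s * (Real.Gamma (s + 1))⁻¹ := by
  rcases eq_or_ne s 0 with rfl | hs
  · simp
  · rw [Real.Gamma_add_one hs, mul_inv, mul_inv_cancel_left₀ hs]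

theorem besselClifford_eq_add (ν z : ℝ) :
    besselClifford ν z =
      (ν + 1) * besselClifford (ν + 1) z + z * besselClifford (ν + 2) z := by
  have h₁ := (hasSum_besselClifford (ν + 1) z).mul_left (ν + 1)
  have h₂ := (hasSum_besselClifford_add_one (ν + 1) z).mul_left z
  rw [add_assoc ν, one_add_one_eq_two] at h₂
  refine (hasSum_besselClifford ν z).unique ((h₁.add h₂).congr_fun fun m => ?_)
  have hpow : z * (m * z ^ (m - 1)) = m * z ^ m := by
    cases m with
    | zero => simp
    | succ m => rw [Nat.add_sub_cancel]; ring
  rw [mul_div_assoc', mul_div_assoc', hpow, ← add_div, ← add_mul, div_eq_mul_inv, div_eq_mul_inv,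
    mul_inv, mul_inv, inv_Gamma_eq_mul_inv_Gamma_add_one (m + ν + 1)]
  ring_nf

theorem besselClifford_zero_pos {ν : ℝ} (hν : -1 < ν) : 0 < besselClifford ν 0 := by
  have h : besselClifford ν 0 = (Real.Gamma (ν + 1))⁻¹ := by
    rw [besselClifford, tsum_eq_single 0 fun m hm => by simp [hm]]
    simp
  rw [h]
  exact inv_pos.2 (Real.Gamma_pos_of_pos (by linarith))

theorem hasDerivAt_rpow_mul_besselClifford_neg (ν : ℝ) {z : ℝ} (hz : 0 < z) :
    HasDerivAt (fun t => t ^ (ν + 1) * besselClifford (ν + 1) (-t))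
      (z ^ ν * besselClifford ν (-z)) z := by
  have h := (Real.hasDerivAt_rpow_const (p := ν + 1) (Or.inl hz.ne')).mul
    ((hasDerivAt_besselClifford (ν + 1) (-z)).comp z (hasDerivAt_neg z))
  refine h.congr_deriv ?_
  rw [besselClifford_eq_add ν, Real.rpow_add_one hz.ne', add_sub_cancel_right, add_assoc ν,
    one_add_one_eq_two]
  simp only [Function.comp_apply]
  ring

theorem besselClifford_add_one_neg_pos {ν b : ℝ} (hν : -1 < ν)
    (hpos : ∀ z ∈ Ioc 0 b, 0 < besselClifford ν (-z)) :
    ∀ z ∈ Ioc 0 b, 0 < besselClifford (ν + 1) (-z) := by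
  intro z hz
  have hmono : StrictMonoOn (fun t => t ^ (ν + 1) * besselClifford (ν + 1) (-t)) (Icc 0 z) := by
    refine strictMonoOn_of_deriv_pos (convex_Icc 0 z) ?_ fun t ht => ?_
    · exact ((Real.continuous_rpow_const (by linarith)).mul
        ((continuous_besselClifford (ν + 1)).comp continuous_neg)).continuousOn
    · rw [interior_Icc] at ht
      rw [(hasDerivAt_rpow_mul_besselClifford_neg ν ht.1).deriv]
      exact mul_pos (Real.rpow_pos_of_pos ht.1 ν) (hpos t ⟨ht.1, ht.2.le.trans hz.2⟩)
  have hlt := hmono (left_mem_Icc.2 hz.1.le) (right_mem_Icc.2 hz.1.le) hz.1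
  simp only [Real.zero_rpow (by linarith : ν + 1 ≠ 0), zero_mul] at hlt
  exact pos_of_mul_pos_right hlt (Real.rpow_nonneg hz.1.le _)

theorem pos_right_of_continuousOn_of_ne_zero {f : ℝ → ℝ} {a b : ℝ} (hab : a ≤ b)
    (hf : ContinuousOn f (Icc a b)) (ha : 0 < f a) (hne : ∀ x ∈ Icc a b, f x ≠ 0) : 0 < f b := by
  by_contra! hb
  obtain ⟨x, hx, hfx⟩ := intermediate_value_Icc' hab hf ⟨hb, ha.le⟩
  exact hne x hx hfx

theorem exists_besselClifford_neg_eq_zero {ν : ℝ} (hν : -1 < ν) :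
    ∃ z ∈ Ioc 0 ((ν + 1) * (ν + 2)), besselClifford ν (-z) = 0 := by
  by_contra! hne
  set b := (ν + 1) * (ν + 2) with hb
  have hb0 : 0 < b := mul_pos (by linarith) (by linarith)
  have hpos : ∀ z ∈ Ioc 0 b, 0 < besselClifford ν (-z) := fun z hz => by
    refine pos_right_of_continuousOn_of_ne_zero (f := fun t => besselClifford ν (-t)) hz.1.le
      ((continuous_besselClifford ν).comp continuous_neg).continuousOn ?_ fun t ht => ?_
    · simpa using besselClifford_zero_pos hν
    · rcases ht.1.eq_or_lt with rfl | ht0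
      · simpa using (besselClifford_zero_pos hν).ne'
      · exact hne t ⟨ht0, ht.2.trans hz.2⟩
  have hpos₃ : 0 < besselClifford (ν + 1 + 1 + 1) (-b) :=
    besselClifford_add_one_neg_pos (by linarith) (besselClifford_add_one_neg_pos (by linarith)
      (besselClifford_add_one_neg_pos hν hpos)) b ⟨hb0, le_rfl⟩
  have hneg : besselClifford ν (-b) = -((ν + 1) * b * besselClifford (ν + 1 + 1 + 1) (-b)) := by
    rw [besselClifford_eq_add ν, besselClifford_eq_add (ν + 1), hb]
    ring_nf
  have := mul_pos (mul_pos (by linarith : 0 < ν + 1) hb0) hpos₃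
  linarith [hpos b ⟨hb0, le_rfl⟩]

theorem besselJ_eq (ν t : ℝ) : besselJ ν t = (t / 2) ^ ν * besselClifford ν (-t ^ 2 / 4) := by
  rw [besselJ, besselClifford, tsum_mul_right, mul_comm]
  congr 2 with m
  rw [show -t ^ 2 / 4 = -1 * (t / 2) ^ 2 by ring, mul_pow, ← pow_mul]
  ring

theorem besselJ_eq_zero_iff {ν t : ℝ} (ht : 0 < t) :
    besselJ ν t = 0 ↔ besselClifford ν (-t ^ 2 / 4) = 0 := by
  rw [besselJ_eq, mul_eq_zero_iff_left (Real.rpow_pos_of_pos (half_pos ht) ν).ne']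

theorem continuous_besselClifford_neg_sq (ν : ℝ) :
    Continuous fun t => besselClifford ν (-t ^ 2 / 4) :=
  (continuous_besselClifford ν).comp (by fun_prop)

theorem setOf_besselJ_eq_zero {ν : ℝ} (hν : -1 < ν) :
    {t | 0 < t ∧ besselJ ν t = 0} = Ici 0 ∩ {t | besselClifford ν (-t ^ 2 / 4) = 0} := by
  ext t
  constructor
  · exact fun ht => ⟨ht.1.le, (besselJ_eq_zero_iff ht.1).1 ht.2⟩
  · rintro ⟨ht, hzero⟩
    have ht0 : 0 < t := (mem_Ici.1 ht).lt_of_ne fun h => by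
      subst h
      exact (besselClifford_zero_pos hν).ne' (by simpa using hzero)
    exact ⟨ht0, (besselJ_eq_zero_iff ht0).2 hzero⟩

theorem isLeast_sInf_besselJ_eq_zero {ν : ℝ} (hν : -1 < ν) :
    IsLeast {t | 0 < t ∧ besselJ ν t = 0} (sInf {t | 0 < t ∧ besselJ ν t = 0}) := by
  refine IsClosed.isLeast_csInf ?_ ?_ ⟨0, fun t ht => ht.1.le⟩
  · rw [setOf_besselJ_eq_zero hν]
    exact isClosed_Ici.inter (isClosed_eq (continuous_besselClifford_neg_sq ν) continuous_const)
  · obtain ⟨z, hz, hzero⟩ := exists_besselClifford_neg_eq_zero hν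
    have ht : 0 < 2 * √z := mul_pos two_pos (Real.sqrt_pos.2 hz.1)
    refine ⟨2 * √z, ht, (besselJ_eq_zero_iff ht).2 ?_⟩
    rwa [mul_pow, Real.sq_sqrt hz.1.le, show -(2 ^ 2 * z) / 4 = -z by ring]

theorem besselClifford_neg_sq_pos {ν c t : ℝ} (hν : -1 < ν)
    (hc : c ∈ lowerBounds {t | 0 < t ∧ besselJ ν t = 0}) (ht : 0 ≤ t) (htc : t < c) :
    0 < besselClifford ν (-t ^ 2 / 4) := by
  refine pos_right_of_continuousOn_of_ne_zero (f := fun s => besselClifford ν (-s ^ 2 / 4)) ht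
    (continuous_besselClifford_neg_sq ν).continuousOn ?_ fun s hs hzero => ?_
  · simpa using besselClifford_zero_pos hν
  · rw [setOf_besselJ_eq_zero hν] at hc
    exact (hs.2.trans_lt htc).not_ge (hc ⟨hs.1, hzero⟩)

/-- The smooth extension to the origin of the radial function `‖x‖^{-ν} J_ν(‖x‖)`,
see `besselRadial_of_ne_zero`. -/
def besselRadial {E : Type*} [Norm E] (ν : ℝ) (x : E) : ℝ :=
  besselClifford ν (-‖x‖ ^ 2 / 4) / 2 ^ ν

theorem besselRadial_of_ne_zero {E : Type*} [NormedAddGroup E] (ν : ℝ) {x : E} (hx : x ≠ 0) :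
    besselRadial ν x = ‖x‖ ^ (-ν) * besselJ ν ‖x‖ := by
  have hne : ‖x‖ ^ ν ≠ 0 := (Real.rpow_pos_of_pos (norm_pos_iff.2 hx) ν).ne'
  rw [besselRadial, besselJ_eq, Real.div_rpow (norm_nonneg x) zero_le_two,
    Real.rpow_neg (norm_nonneg x), div_mul_eq_mul_div, mul_div_assoc, inv_mul_cancel_left₀ hne]

theorem contDiff_besselRadial {E : Type*} [NormedAddCommGroup E] [InnerProductSpace ℝ E] (ν : ℝ) :
    ContDiff ℝ (⊤ : ℕ∞) (besselRadial ν : E → ℝ) :=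
  ((contDiff_besselClifford ν).comp ((contDiff_norm_sq ℝ).neg.div_const _)).div_const _

theorem hasFDerivAt_comp_norm_sq {E : Type*} [NormedAddCommGroup E] [InnerProductSpace ℝ E]
    {f : ℝ → ℝ} {f' : ℝ} {x : E} (hf : HasDerivAt f f' (‖x‖ ^ 2)) :
    HasFDerivAt (fun y => f (‖y‖ ^ 2)) ((2 * f') • innerSL ℝ x) x := by
  refine (hf.comp_hasFDerivAt x (hasStrictFDerivAt_norm_sq x).hasFDerivAt).congr_fderiv ?_
  ext v
  simp
  ring

theorem lap_comp_norm_sq {n : ℕ} {f f' : ℝ → ℝ} {f'' : ℝ} {x : EuclideanSpace ℝ (Fin n)}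
    (hf : ∀ r, HasDerivAt f (f' r) r) (hf' : HasDerivAt f' f'' (‖x‖ ^ 2)) :
    lap (fun y => f (‖y‖ ^ 2)) x = 4 * ‖x‖ ^ 2 * f'' + 2 * n * f' (‖x‖ ^ 2) := by
  have hfirst (i : Fin n) (y : EuclideanSpace ℝ (Fin n)) :
      fderiv ℝ (fun y => f (‖y‖ ^ 2)) y (EuclideanSpace.single i 1) = 2 * f' (‖y‖ ^ 2) * y i := by
    rw [(hasFDerivAt_comp_norm_sq (hf _)).fderiv]
    simp [EuclideanSpace.inner_single_right]
  have hsecond (i : Fin n) :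
      fderiv ℝ (fun y : EuclideanSpace ℝ (Fin n) => 2 * f' (‖y‖ ^ 2) * y i) x
        (EuclideanSpace.single i 1) = 4 * f'' * x i ^ 2 + 2 * f' (‖x‖ ^ 2) := by
    have hcoord : HasFDerivAt (fun y : EuclideanSpace ℝ (Fin n) => y i)
        (EuclideanSpace.proj i : EuclideanSpace ℝ (Fin n) →L[ℝ] ℝ) x :=
      (EuclideanSpace.proj i : EuclideanSpace ℝ (Fin n) →L[ℝ] ℝ).hasFDerivAt
    rw [(((hasFDerivAt_comp_norm_sq hf').const_mul 2).fun_mul hcoord).fderiv]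
    simp [EuclideanSpace.inner_single_right]
    ring
  simp only [lap, hfirst, hsecond]
  rw [Finset.sum_add_distrib, ← Finset.mul_sum, ← EuclideanSpace.real_norm_sq_eq, Finset.sum_const,
    Finset.card_univ, Fintype.card_fin, nsmul_eq_mul]
  ring

theorem lap_besselRadial (n : ℕ) (x : EuclideanSpace ℝ (Fin n)) :
    lap (besselRadial (((n : ℝ) - 2) / 2)) x = -besselRadial (((n : ℝ) - 2) / 2) x := by
  set ν : ℝ := ((n : ℝ) - 2) / 2 with hν
  have hderiv (μ r : ℝ) : HasDerivAt (fun s => besselClifford μ (-s / 4))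
      (-1 / 4 * besselClifford (μ + 1) (-r / 4)) r :=
    ((hasDerivAt_besselClifford μ _).comp r ((hasDerivAt_neg r).div_const 4)).congr_deriv
      (mul_comm _ _)
  have hlap := lap_comp_norm_sq (x := x) (fun r => (hderiv ν r).div_const (2 ^ ν))
    (((hderiv (ν + 1) _).const_mul _).div_const _)
  refine hlap.trans ?_
  rw [besselRadial, besselClifford_eq_add ν, add_assoc ν, one_add_one_eq_two,
    show (n : ℝ) = 2 * (ν + 1) by rw [hν]; ring]
  ring

theorem radial_bessel_solution_general (n : ℕ) (hn : 1 ≤ n) :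
    ∃ u : EuclideanSpace ℝ (Fin n) → ℝ,
      ContDiff ℝ (⊤ : ℕ∞) u ∧
      (∀ x : EuclideanSpace ℝ (Fin n), x ≠ 0 →
        u x = ‖x‖ ^ (((2 : ℝ) - n) / 2) * besselJ (((n : ℝ) - 2) / 2) ‖x‖) ∧
      (∀ x, lap u x + u x = 0) ∧
      (∀ x ∈ ball (0 : EuclideanSpace ℝ (Fin n)) (besselZero n), 0 < u x) ∧
      (∀ x ∈ sphere (0 : EuclideanSpace ℝ (Fin n)) (besselZero n), u x = 0) := by
  have hν : -1 < ((n : ℝ) - 2) / 2 := by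
    have : (1 : ℝ) ≤ n := mod_cast hn
    linarith
  have hc : IsLeast {t | 0 < t ∧ besselJ (((n : ℝ) - 2) / 2) t = 0} (besselZero n) :=
    isLeast_sInf_besselJ_eq_zero hν
  refine ⟨besselRadial (((n : ℝ) - 2) / 2), contDiff_besselRadial _, fun x hx => ?_, fun x => ?_,
    fun x hx => ?_, fun x hx => ?_⟩
  · rw [besselRadial_of_ne_zero _ hx, ← neg_div, neg_sub]
  · rw [lap_besselRadial, neg_add_cancel]
  · exact div_pos (besselClifford_neg_sq_pos hν hc.2 (norm_nonneg x) (mem_ball_zero_iff.1 hx))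
      (by positivity)
  · rw [besselRadial, mem_sphere_zero_iff_norm.1 hx, (besselJ_eq_zero_iff hc.1.1).1 hc.1.2,
      zero_div]

/-- the radial function `u(x) = |x|^{(2−n)/2} J_{(n−2)/2}(|x|)`, extended
appropriately at the origin, is a smooth solution of `Δu + u = 0` on `ℝⁿ`, strictly positive
on the open ball `B(0, c_n)` and vanishing on its boundary sphere. -/
theorem radial_bessel_solution (n : ℕ) (hn : 2 ≤ n) :
    ∃ u : EuclideanSpace ℝ (Fin n) → ℝ,
      ContDiff ℝ (⊤ : ℕ∞) u ∧
      (∀ x : EuclideanSpace ℝ (Fin n), x ≠ 0 →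
        u x = ‖x‖ ^ (((2 : ℝ) - n) / 2) * besselJ (((n : ℝ) - 2) / 2) ‖x‖) ∧
      (∀ x, lap u x + u x = 0) ∧
      (∀ x ∈ ball (0 : EuclideanSpace ℝ (Fin n)) (besselZero n), 0 < u x) ∧
      (∀ x ∈ sphere (0 : EuclideanSpace ℝ (Fin n)) (besselZero n), u x = 0) :=
  radial_bessel_solution_general n (one_le_two.trans hn)
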